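/- Let P be a Köthe set on an index set I, and let k, l be real numbers with 0 < k < l. Suppose P^{[l]} ≺ P^{[k]}, i.e., for every p ∈ P there exist q ∈ P and C > 0 with p_i^l ≤ C q_i^k for all i ∈ I. Then P^{[2]} ≺ P, i.e., for every p ∈ P there exist q ∈ P and C > 0 with p_i² ≤ C q_i for all i ∈ I. -/

import Mathlib

/-!
With `a = l / k > 1`, taking `k`-th roots in the hypothesis gives `P^{[a]} ≺ P`, and iterating
gives `P^{[a ^ n]} ≺ P` for every `n`. Choose `n` with `2 ≤ a ^ n`. Since `t ^ 2 ≤ t` for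
`0 ≤ t ≤ 1` and `t ^ 2 ≤ t ^ (a ^ n)` for `t ≥ 1`, the function `p ^ 2` is bounded by a multiple
of `max p q`, where `p ^ (a ^ n) ≤ C q`, and directedness of `P` finishes the proof.
-/

/-- The relation `P^{[a]} ≺ P` can be iterated. -/
lemma kothe_pow_iterate {I : Type*} (P : Set (I → ℝ)) (a : ℝ) (ha : 0 < a)
    (hpos : ∀ p ∈ P, ∀ i, 0 ≤ p i)
    (h : ∀ p ∈ P, ∃ q ∈ P, ∃ C > (0 : ℝ), ∀ i, p i ^ a ≤ C * q i) (n : ℕ) :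
    ∀ p ∈ P, ∃ q ∈ P, ∃ C > (0 : ℝ), ∀ i, p i ^ (a ^ n) ≤ C * q i := by
  induction n with
  | zero => exact fun p hp => ⟨p, hp, 1, one_pos, fun i => by simp⟩
  | succ n ih =>
    intro p hp
    obtain ⟨q, hq, C, hC, hpq⟩ := ih p hp
    obtain ⟨r, hr, D, hD, hqr⟩ := h q hq
    refine ⟨r, hr, C ^ a * D, by positivity, fun i => ?_⟩
    calc p i ^ (a ^ (n + 1)) = (p i ^ (a ^ n)) ^ a := by
          rw [pow_succ, Real.rpow_mul (hpos p hp i)]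
      _ ≤ (C * q i) ^ a :=
          Real.rpow_le_rpow (Real.rpow_nonneg (hpos p hp i) _) (hpq i) ha.le
      _ = C ^ a * q i ^ a := Real.mul_rpow hC.le (hpos q hq i)
      _ ≤ C ^ a * (D * r i) := by gcongr; exact hqr i
      _ = C ^ a * D * r i := by ring

/-- If `P^{[l]} ≺ P^{[k]}` for some reals `0 < k < l`, then `P^{[2]} ≺ P`. -/
theorem kothe_pow_prec {I : Type*} (P : Set (I → ℝ)) (k l : ℝ)
    (hk : 0 < k) (hkl : k < l)
    (hpos : ∀ p ∈ P, ∀ i, 0 ≤ p i)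
    (hP1 : ∀ i, ∃ p ∈ P, 0 < p i)
    (hP2 : ∀ p ∈ P, ∀ q ∈ P, ∃ r ∈ P, ∀ i, max (p i) (q i) ≤ r i)
    (h : ∀ p ∈ P, ∃ q ∈ P, ∃ C > (0 : ℝ), ∀ i, p i ^ l ≤ C * q i ^ k) :
    ∀ p ∈ P, ∃ q ∈ P, ∃ C > (0 : ℝ), ∀ i, p i ^ 2 ≤ C * q i := by
  have ha : 1 < l / k := (one_lt_div hk).2 hkl
  have hroot : ∀ p ∈ P, ∃ q ∈ P, ∃ C > (0 : ℝ), ∀ i, p i ^ (l / k) ≤ C * q i := by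
    intro p hp
    obtain ⟨q, hq, C, hC, hpq⟩ := h p hp
    refine ⟨q, hq, C ^ k⁻¹, by positivity, fun i => ?_⟩
    have hqi := hpos q hq i
    calc p i ^ (l / k) = (p i ^ l) ^ k⁻¹ := by
          rw [div_eq_mul_inv, Real.rpow_mul (hpos p hp i)]
      _ ≤ (C * q i ^ k) ^ k⁻¹ :=
          Real.rpow_le_rpow (Real.rpow_nonneg (hpos p hp i) _) (hpq i) (by positivity)
      _ = C ^ k⁻¹ * q i := by
          rw [Real.mul_rpow hC.le (by positivity), Real.rpow_rpow_inv hqi hk.ne']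
  obtain ⟨n, hn⟩ := pow_unbounded_of_one_lt 2 ha
  intro p hp
  obtain ⟨q, hq, C, hC, hpq⟩ := kothe_pow_iterate P (l / k) (by linarith) hpos hroot n p hp
  obtain ⟨r, hr, hmax⟩ := hP2 p hp q hq
  refine ⟨r, hr, 1 + C, by positivity, fun i => ?_⟩
  have hpi := hpos p hp i
  have hpr : p i ≤ r i := (le_max_left _ _).trans (hmax i)
  have hqr : q i ≤ r i := (le_max_right _ _).trans (hmax i)
  have hri : 0 ≤ r i := hpi.trans hpr
  rcases le_total (p i) 1 with h1 | h1
  · nlinarith [mul_nonneg hC.le hri]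
  · have h2 : p i ^ 2 ≤ p i ^ ((l / k) ^ n) := by
      rw [← Real.rpow_two]
      exact Real.rpow_le_rpow_of_exponent_le h1 hn.le
    nlinarith [hpq i, mul_le_mul_of_nonneg_left hqr hC.le]
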